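/- With the above construction, if A ⊆ ℕ contains a non-trivial arithmetic progression of length n (i.e. a, a+d, …, a+(n−1)d ∈ A with d ≥ 1), then the compact set B = ⋂_k B_k ⊆ [0,1] contains a non-trivial arithmetic progression of length n, i.e. there exist x ∈ [0,1] and δ ≠ 0 with x, x+δ, …, x+(n−1)δ ∈ B. -/

import Mathlib

open MeasureTheory Filter Set
open scoped BigOperators ENNReal

/-- Number of elements of `A ⊆ ℕ` below `n`, i.e. `|A ∩ [0, n)|`. -/
noncomputable def cardBelow (A : Set ℕ) (n : ℕ) : ℕ := Nat.card ↥(A ∩ Set.Iio n)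

/-- `A ⊆ ℕ` has upper fractional density `α`: `limsup_N |A ∩ [0,N)| / N^b` is `∞` for
every `b < α` and `0` for every `b > α`. -/
def HasUpperFracDensity (A : Set ℕ) (α : ℝ) : Prop :=
  (∀ b : ℝ, b < α →
    Filter.atTop.limsup (fun n : ℕ => (cardBelow A n : ℝ≥0∞) / (n : ℝ≥0∞) ^ b) = ⊤) ∧
  (∀ b : ℝ, α < b →
    Filter.atTop.limsup (fun n : ℕ => (cardBelow A n : ℝ≥0∞) / (n : ℝ≥0∞) ^ b) = 0)

/-- `η_k = 1 − 1/(k+1)²`. -/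
noncomputable def etaseq (k : ℕ) : ℝ := 1 - 1 / ((k : ℝ) + 1) ^ 2

/-- The common length `L_k = (η_1 ⋯ η_k)/(N_1 ⋯ N_k)` of the intervals making up the
`k`-th stage `B_k` of the construction (`L_0 = 1`). -/
noncomputable def Lfun (N : ℕ → ℕ) : ℕ → ℝ
  | 0 => 1
  | k + 1 => etaseq (k + 1) * Lfun N k / (N (k + 1) : ℝ)

/-- The set of left endpoints of the intervals making up the `k`-th stage `B_k`:
at stage `k+1` each interval of `B_k` is divided into `N_{k+1}` equal subintervals and,
for each `a ∈ A ∩ [0, N_{k+1})`, the left-hand portion of the `a`-th subinterval is kept. -/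
def leftEnds (A : Set ℕ) (N : ℕ → ℕ) : ℕ → Set ℝ
  | 0 => {0}
  | k + 1 => {y : ℝ | ∃ x ∈ leftEnds A N k, ∃ a : ℕ, a ∈ A ∧ a < N (k + 1) ∧
      y = x + (a : ℝ) * Lfun N k / (N (k + 1) : ℝ)}

/-- The `k`-th stage `B_k` of the construction: the union of the closed intervals of
length `L_k` with left endpoints in `leftEnds A N k`. -/
def Bset (A : Set ℕ) (N : ℕ → ℕ) (k : ℕ) : Set ℝ :=
  ⋃ x ∈ leftEnds A N k, Set.Icc x (x + Lfun N k)

/-- The limit set `B = ⋂_k B_k` of the construction. -/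
def Blim (A : Set ℕ) (N : ℕ → ℕ) : Set ℝ := ⋂ k, Bset A N k

/-!
Choosing one digit `e k ∈ A ∩ [0, N_{k+1})` at every stage selects a nested sequence of intervals,
which shrinks to the point `∑ k, e k * L_k / N_{k+1}` of `B`. Letting a single digit `e K` vary and
fixing all the others moves this point affinely, so `B` contains a scaled and translated copy of
`A ∩ [0, N_{K+1})` for every `K`. For `K` large this copy contains the image of any given finite
progression in `A`.
-/

open Function

section IntervalLengths

lemma etaseq_le_one (k : ℕ) : etaseq k ≤ 1 :=
  sub_le_self 1 (by positivity)

lemma etaseq_pos {k : ℕ} (hk : k ≠ 0) : 0 < etaseq k := by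
  have one_lt_sq : (1 : ℝ) < ((k : ℝ) + 1) ^ 2 :=
    one_lt_pow₀ (lt_add_of_pos_left 1 (by positivity)) two_ne_zero
  exact sub_pos.2 ((div_lt_one (by positivity)).2 one_lt_sq)

variable {N : ℕ → ℕ}

lemma Lfun_nonneg (N : ℕ → ℕ) : ∀ k, 0 ≤ Lfun N k
  | 0 => zero_le_one
  | k + 1 =>
    div_nonneg (mul_nonneg (etaseq_pos k.succ_ne_zero).le (Lfun_nonneg N k)) (Nat.cast_nonneg _)

lemma Lfun_pos (hN : ∀ k, 0 < N (k + 1)) : ∀ k, 0 < Lfun N k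
  | 0 => one_pos
  | k + 1 =>
    div_pos (mul_pos (etaseq_pos k.succ_ne_zero) (Lfun_pos hN k)) (Nat.cast_pos.2 (hN k))

/-- The spacing `L_k / N_{k+1}` of the subintervals into which the construction divides each
interval of `B_k`. -/
noncomputable def gridStep (N : ℕ → ℕ) (k : ℕ) : ℝ := Lfun N k / N (k + 1)

lemma gridStep_nonneg (N : ℕ → ℕ) (k : ℕ) : 0 ≤ gridStep N k :=
  div_nonneg (Lfun_nonneg N k) (Nat.cast_nonneg _)

lemma gridStep_pos (hN : ∀ k, 0 < N (k + 1)) (k : ℕ) : 0 < gridStep N k :=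
  div_pos (Lfun_pos hN k) (Nat.cast_pos.2 (hN k))

lemma natCast_mul_gridStep {k : ℕ} (hN : N (k + 1) ≠ 0) : N (k + 1) * gridStep N k = Lfun N k :=
  mul_div_cancel₀ _ (Nat.cast_ne_zero.2 hN)

lemma Lfun_succ_le_gridStep (N : ℕ → ℕ) (k : ℕ) : Lfun N (k + 1) ≤ gridStep N k := by
  rw [Lfun, mul_div_assoc]
  exact mul_le_of_le_one_left (gridStep_nonneg N k) (etaseq_le_one _)

end IntervalLengths

section DigitExpansions

variable {A : Set ℕ} {N e : ℕ → ℕ}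

/-- The left endpoint of the interval of `B_k` reached by choosing the subinterval `e i` at stage
`i + 1`, for every `i < k`. -/
noncomputable def digitLeftEnd (N e : ℕ → ℕ) (k : ℕ) : ℝ :=
  ∑ i ∈ Finset.range k, e i * gridStep N i

/-- The real number with digits `e`, i.e. the point to which the intervals starting at
`digitLeftEnd N e k` shrink when every `e k` is less than `N (k + 1)`. -/
noncomputable def digitPoint (N e : ℕ → ℕ) : ℝ := ∑' k, e k * gridStep N k

lemma digit_mul_gridStep_nonneg (N e : ℕ → ℕ) (k : ℕ) : 0 ≤ e k * gridStep N k :=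
  mul_nonneg (Nat.cast_nonneg _) (gridStep_nonneg N k)

lemma digitLeftEnd_succ (N e : ℕ → ℕ) (k : ℕ) :
    digitLeftEnd N e (k + 1) = digitLeftEnd N e k + e k * gridStep N k :=
  Finset.sum_range_succ _ k

lemma digitLeftEnd_mem_leftEnds (he : ∀ k, e k ∈ A ∩ Iio (N (k + 1))) (k : ℕ) :
    digitLeftEnd N e k ∈ leftEnds A N k := by
  induction k with
  | zero => exact Finset.sum_range_zero _
  | succ k ih =>
    refine ⟨digitLeftEnd N e k, ih, e k, (he k).1, (he k).2, ?_⟩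
    rw [digitLeftEnd_succ, gridStep, mul_div_assoc]

lemma digitLeftEnd_mono (N e : ℕ → ℕ) : Monotone (digitLeftEnd N e) :=
  monotone_nat_of_le_succ fun k => by
    rw [digitLeftEnd_succ]
    exact le_add_of_nonneg_right (digit_mul_gridStep_nonneg N e k)

lemma digitLeftEnd_add_Lfun_antitone (he : ∀ k, e k < N (k + 1)) :
    Antitone fun k => digitLeftEnd N e k + Lfun N k := by
  refine antitone_nat_of_succ_le fun k => ?_
  have digit_succ_le : (e k : ℝ) + 1 ≤ N (k + 1) := mod_cast he k
  calc digitLeftEnd N e (k + 1) + Lfun N (k + 1)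
      ≤ digitLeftEnd N e (k + 1) + gridStep N k := by grw [Lfun_succ_le_gridStep]
    _ = digitLeftEnd N e k + (e k + 1) * gridStep N k := by rw [digitLeftEnd_succ]; ring
    _ ≤ digitLeftEnd N e k + N (k + 1) * gridStep N k := by
      gcongr
      exact gridStep_nonneg N k
    _ = digitLeftEnd N e k + Lfun N k := by rw [natCast_mul_gridStep (Nat.ne_zero_of_lt (he k))]

lemma digitLeftEnd_le_digitLeftEnd_add_Lfun (he : ∀ k, e k < N (k + 1)) (m k : ℕ) :
    digitLeftEnd N e m ≤ digitLeftEnd N e k + Lfun N k :=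
  calc digitLeftEnd N e m
      ≤ digitLeftEnd N e (max m k) := digitLeftEnd_mono N e (le_max_left m k)
    _ ≤ digitLeftEnd N e (max m k) + Lfun N (max m k) :=
      le_add_of_nonneg_right (Lfun_nonneg N _)
    _ ≤ digitLeftEnd N e k + Lfun N k := digitLeftEnd_add_Lfun_antitone he (le_max_right m k)

lemma summable_digit_mul_gridStep (he : ∀ k, e k < N (k + 1)) :
    Summable fun k => e k * gridStep N k :=
  summable_of_sum_range_le (digit_mul_gridStep_nonneg N e)
    fun m => digitLeftEnd_le_digitLeftEnd_add_Lfun he m 0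

lemma digitPoint_mem_Icc (he : ∀ k, e k < N (k + 1)) (k : ℕ) :
    digitPoint N e ∈ Icc (digitLeftEnd N e k) (digitLeftEnd N e k + Lfun N k) :=
  ⟨(summable_digit_mul_gridStep he).sum_le_tsum _ fun i _ => digit_mul_gridStep_nonneg N e i,
    Real.tsum_le_of_sum_range_le (digit_mul_gridStep_nonneg N e)
      fun m => digitLeftEnd_le_digitLeftEnd_add_Lfun he m k⟩

lemma digitPoint_mem_Blim (he : ∀ k, e k ∈ A ∩ Iio (N (k + 1))) : digitPoint N e ∈ Blim A N :=
  mem_iInter.2 fun k =>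
    mem_biUnion (digitLeftEnd_mem_leftEnds he k) (digitPoint_mem_Icc (fun i => (he i).2) k)

lemma digitPoint_update (he : Summable fun k => e k * gridStep N k) (K a : ℕ) :
    digitPoint N (update e K a) = digitPoint N e + (a - e K) * gridStep N K := by
  have update_terms : (fun k => update e K a k * gridStep N k) =
      update (fun k => e k * gridStep N k) K (a * gridStep N K) := by
    ext k
    obtain rfl | hk := eq_or_ne k K
    · simp only [update_self]
    · simp only [update_of_ne hk]
  rw [digitPoint, update_terms, (he.hasSum.update K _).tsum_eq, digitPoint]
  ring

end DigitExpansions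

lemma Blim_subset_Icc (A : Set ℕ) (N : ℕ → ℕ) : Blim A N ⊆ Icc 0 1 := by
  have Bset_zero : Bset A N 0 = Icc 0 1 := by
    simp only [Bset, leftEnds, Lfun, biUnion_singleton, zero_add]
  exact Bset_zero ▸ iInter_subset (Bset A N) 0

theorem exists_affine_mapsTo_Blim {A : Set ℕ} {N : ℕ → ℕ}
    (hA : ∀ k, (A ∩ Iio (N (k + 1))).Nonempty) (K : ℕ) :
    ∃ x r : ℝ, 0 < r ∧
      MapsTo (fun a : ℕ => x + a * r) (A ∩ Iio (N (K + 1))) (Blim A N) := by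
  choose e he using hA
  have hsum := summable_digit_mul_gridStep fun k => (he k).2
  refine ⟨digitPoint N e - e K * gridStep N K, gridStep N K,
    gridStep_pos (fun k => pos_of_gt (he k).2) K, fun a ha => ?_⟩
  have digits_mem : ∀ k, update e K a k ∈ A ∩ Iio (N (k + 1)) :=
    (forall_update_iff e fun k b => b ∈ A ∩ Iio (N (k + 1))).2 ⟨ha, fun k _ => he k⟩
  convert digitPoint_mem_Blim digits_mem using 1
  rw [digitPoint_update hsum]
  ring

lemma inter_Iio_nonempty_of_cardBelow_div_pos {A : Set ℕ} {n : ℕ} {y : ℝ}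
    (h : 0 < (cardBelow A n : ℝ) / y) : (A ∩ Iio n).Nonempty := by
  have cardBelow_ne_zero : cardBelow A n ≠ 0 := Nat.cast_ne_zero.1 (div_ne_zero_iff.1 h.ne').1
  exact nonempty_coe_sort.1 (Nat.card_ne_zero.1 cardBelow_ne_zero).1

theorem statement7_general (A : Set ℕ) (N : ℕ → ℕ) (hN : Tendsto N atTop atTop)
    (hA : ∀ k, (A ∩ Iio (N (k + 1))).Nonempty) (n : ℕ)
    (hAP : ∃ a d : ℕ, 1 ≤ d ∧ ∀ j : ℕ, j < n → a + j * d ∈ A) :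
    ∃ x δ : ℝ, x ∈ Icc (0 : ℝ) 1 ∧ δ ≠ 0 ∧ ∀ j : ℕ, j < n → x + (j : ℝ) * δ ∈ Blim A N := by
  obtain ⟨a, d, hd, hAP⟩ := hAP
  obtain rfl | hn := n.eq_zero_or_pos
  · exact ⟨0, 1, by simp, one_ne_zero, by simp⟩
  obtain ⟨K, hK⟩ : ∃ K, a + n * d < N (K + 1) :=
    ((hN.comp (tendsto_add_atTop_nat 1)).eventually_gt_atTop _).exists
  obtain ⟨x, r, hr, hB⟩ := exists_affine_mapsTo_Blim hA K
  have hterm : ∀ j < n, x + a * r + j * (d * r) ∈ Blim A N := fun j hj => by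
    have term_lt : a + j * d < N (K + 1) := lt_of_le_of_lt (by gcongr) hK
    convert hB ⟨hAP j hj, term_lt⟩ using 1
    push_cast
    ring
  have hd_pos : (0 : ℝ) < d := Nat.cast_pos.2 hd
  refine ⟨x + a * r, d * r, Blim_subset_Icc A N ?_, (mul_pos hd_pos hr).ne', hterm⟩
  simpa using hterm 0 hn

/-- Preservation of arithmetic progressions from `ℕ` to `[0,1]`: with the construction
above, if `A ⊆ ℕ` contains a non-trivial arithmetic progression of length `n`, then the
compact set `B = ⋂_k B_k ⊆ [0,1]` contains a non-trivial arithmetic progression of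
length `n`. -/
theorem statement7 (A : Set ℕ) (β : ℝ) (hβ0 : 0 < β) (hβ1 : β ≤ 1)
    (hdens : HasUpperFracDensity A β)
    (N : ℕ → ℕ) (hN : StrictMono N) (hNpos : 0 < N 1)
    (c C : ℝ) (hc : 0 < c)
    (hbound : ∀ i : ℕ, 1 ≤ i →
      c ≤ (cardBelow A (N i) : ℝ) / (N i : ℝ) ^ β ∧
      (cardBelow A (N i) : ℝ) / (N i : ℝ) ^ β ≤ C)
    (n : ℕ)
    (hAP : ∃ a d : ℕ, 1 ≤ d ∧ ∀ j : ℕ, j < n → a + j * d ∈ A) :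
    ∃ x δ : ℝ, x ∈ Set.Icc (0 : ℝ) 1 ∧ δ ≠ 0 ∧
      ∀ j : ℕ, j < n → x + (j : ℝ) * δ ∈ Blim A N :=
  statement7_general A N hN.tendsto_atTop (fun k =>
    inter_Iio_nonempty_of_cardBelow_div_pos (hc.trans_le (hbound (k + 1) k.succ_pos).1)) n hAP
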